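/- For every positive integer r, D_±(C_7^{2r}) ≥ 5r + 1; in particular, since D*_±(C_7^{2r}) = 4r + 1, the difference D_±(C_7^{2r}) − D*_±(C_7^{2r}) is at least r, so this difference can be made arbitrarily large. -/

import Mathlib

open Finset

/-- A sequence `g` over `G` has an `A`-weighted zero-subsum: there is a nonempty
index set `I` and weights `a i ∈ A` for `i ∈ I` with `∑ i ∈ I, a i • g i = 0`. -/
def HasWZS (A : Set ℤ) {G : Type*} [AddCommGroup G] {ℓ : ℕ} (g : Fin ℓ → G) : Prop :=
  ∃ (I : Finset (Fin ℓ)) (a : Fin ℓ → ℤ), I.Nonempty ∧ (∀ i ∈ I, a i ∈ A) ∧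
    ∑ i ∈ I, a i • g i = 0

/-- The `A`-weighted Davenport constant of `G`: the smallest `ℓ` such that every
sequence of length `ℓ` over `G` has an `A`-weighted zero-subsum. -/
noncomputable def DavW (A : Set ℤ) (G : Type*) [AddCommGroup G] : ℕ :=
  sInf {ℓ : ℕ | ∀ g : Fin ℓ → G, HasWZS A g}

/-- The plus-minus weighted Davenport constant. -/
noncomputable def Davpm (G : Type*) [AddCommGroup G] : ℕ :=
  DavW ({1, -1} : Set ℤ) G

/-- `D*₊₋(G)`: the maximum of `∑ i, ⌊log₂ m i⌋ + 1` over all ways of writing `G` as a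
direct sum of cyclic groups of orders `m 1, …, m t`. -/
noncomputable def DavStarPM (G : Type*) [AddCommGroup G] : ℕ :=
  sSup {k : ℕ | ∃ (t : ℕ) (m : Fin t → ℕ), (∀ i, 0 < m i) ∧
    Nonempty (G ≃+ (∀ i, ZMod (m i))) ∧ k = (∑ i, Nat.log 2 (m i)) + 1}

/-- The five plane vectors `(1,0), (0,1), (1,2), (1,4), (3,1)` over `ZMod 7`. -/
def vv (e s : ℕ) : ZMod 7 :=
  if e = 0 then (if s = 0 then 1 else if s = 1 then 0 else if s = 2 then 1 else if s = 3 then 1 else 3)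
  else (if s = 0 then 0 else if s = 1 then 1 else if s = 2 then 2 else if s = 3 then 4 else 1)

lemma plane_key (c : ℕ → ZMod 7) (hc : ∀ n, c n = 0 ∨ c n = 1 ∨ c n = -1)
    (h : ∀ e < 2, ∑ s ∈ range 5, c s * vv e s = 0) : ∀ s < 5, c s = 0 := by
  have h0 := h 0 (by norm_num)
  have h1 := h 1 (by norm_num)
  simp only [sum_range_succ, range_zero, sum_empty, vv] at h0 h1
  norm_num at h0 h1
  have key : ∀ a ∈ ({0, 1, -1} : Finset (ZMod 7)), ∀ b ∈ ({0, 1, -1} : Finset (ZMod 7)),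
      ∀ c ∈ ({0, 1, -1} : Finset (ZMod 7)), ∀ d ∈ ({0, 1, -1} : Finset (ZMod 7)),
      ∀ e ∈ ({0, 1, -1} : Finset (ZMod 7)), a + c + d + e * 3 = 0 → b + c * 2 + d * 4 + e = 0 →
      a = 0 ∧ b = 0 ∧ c = 0 ∧ d = 0 ∧ e = 0 := by decide +kernel
  have hm : ∀ n, c n ∈ ({0, 1, -1} : Finset (ZMod 7)) := fun n => by simpa using hc n
  obtain ⟨k0, k1, k2, k3, k4⟩ := key _ (hm 0) _ (hm 1) _ (hm 2) _ (hm 3) _ (hm 4) h0 h1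
  intro s hs
  interval_cases s <;> assumption

lemma sum_block (r b : ℕ) (hb : b < r) (c w : ℕ → ZMod 7) :
    ∑ n ∈ range (5 * r), c n * (if n / 5 = b then w (n % 5) else 0) =
      ∑ s ∈ range 5, c (5 * b + s) * w s := by
  have hsub : Ico (5 * b) (5 * b + 5) ⊆ range (5 * r) := by
    intro x hx
    simp only [mem_Ico, mem_range] at *
    omega
  rw [← sum_subset hsub, sum_Ico_eq_sum_range]
  · have : 5 * b + 5 - 5 * b = 5 := by omega
    rw [this]
    refine sum_congr rfl fun s hs => ?_
    have hs' := mem_range.1 hs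
    rw [if_pos (by omega), show (5 * b + s) % 5 = s by omega]
  · intro x _ hx
    simp only [mem_Ico] at hx
    rw [if_neg (by omega), mul_zero]

lemma no_wzs (r l : ℕ) (hl : l ≤ 5 * r) :
    ∃ g : Fin l → (Fin (2 * r) → ZMod 7), ¬ HasWZS ({1, -1} : Set ℤ) g := by
  classical
  refine ⟨fun i j => if (i : ℕ) / 5 = (j : ℕ) / 2 then vv (j % 2) (i % 5) else 0, ?_⟩
  rintro ⟨I, a, ⟨k, hk⟩, ha, hsum⟩
  let c : ℕ → ZMod 7 := fun n => if h : n < l then (if (⟨n, h⟩ : Fin l) ∈ I then (a ⟨n, h⟩ : ZMod 7) else 0) else 0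
  have hc : ∀ n, c n = 0 ∨ c n = 1 ∨ c n = -1 := by
    intro n
    simp only [c]
    split_ifs with h1 h2
    · rcases ha _ h2 with h | h
      · right; left; rw [h]; simp
      · right; right; rw [Set.mem_singleton_iff.1 h]; simp
    · simp
    · simp
  have hkl := k.2
  have hb : (k : ℕ) / 5 < r := by omega
  have hmain := plane_key (fun s => c (5 * ((k : ℕ) / 5) + s)) (fun n => hc _) (by
    intro e he
    rw [← sum_block r _ hb c (vv e)]
    have h := congrFun hsum ⟨2 * ((k : ℕ) / 5) + e, by omega⟩
    simp only [Finset.sum_apply, Pi.smul_apply, Pi.zero_apply] at h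
    simp only [zsmul_eq_mul] at h
    rw [show (2 * ((k : ℕ) / 5) + e) / 2 = (k : ℕ) / 5 by omega,
      show (2 * ((k : ℕ) / 5) + e) % 2 = e by omega] at h
    refine Eq.trans ?_ h
    rw [← sum_subset (range_subset_range.2 hl), ← Fin.sum_univ_eq_sum_range
      (fun n => c n * (if n / 5 = (k : ℕ) / 5 then vv e (n % 5) else 0)) l]
    · symm
      rw [← sum_subset (subset_univ I)]
      · refine sum_congr rfl fun i hi => ?_
        simp [c, hi]
      · intro i _ hi
        simp [c, hi]
    · intro x _ hx
      have : ¬ x < l := by simpa using hx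
      simp [c, this])
  have h0 := hmain ((k : ℕ) % 5) (Nat.mod_lt _ (by norm_num))
  simp only [Nat.div_add_mod, c, hkl, hk, dif_pos, if_pos, Fin.eta] at h0
  rcases ha k hk with h | h
  · rw [h] at h0; revert h0; decide
  · rw [Set.mem_singleton_iff.1 h] at h0; revert h0; decide

lemma dav_lower (r : ℕ) : 5 * r + 1 ≤ Davpm (Fin (2 * r) → ZMod 7) := by
  classical
  have hne : {l : ℕ | ∀ g : Fin l → (Fin (2 * r) → ZMod 7), HasWZS ({1, -1} : Set ℤ) g}.Nonempty := by
    refine ⟨Fintype.card (Fin (2 * r) → ZMod 7) + 1, fun g => ?_⟩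
    obtain ⟨i, j, hij, he⟩ := Fintype.exists_ne_map_eq_of_card_lt g (by simp)
    refine ⟨{i, j}, fun x => if x = i then 1 else -1, ⟨i, by simp⟩, ?_, ?_⟩
    · intro x _
      by_cases h : x = i <;> simp [h]
    · rw [sum_pair hij]
      simp [hij.symm, he]
  refine le_csInf hne fun l hl => ?_
  by_contra hcon
  obtain ⟨g, hg⟩ := no_wzs r l (by omega)
  exact hg (hl g)

lemma star_eq (r : ℕ) : DavStarPM (Fin (2 * r) → ZMod 7) = 4 * r + 1 := by
  have : {k : ℕ | ∃ (t : ℕ) (m : Fin t → ℕ), (∀ i, 0 < m i) ∧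
      Nonempty ((Fin (2 * r) → ZMod 7) ≃+ (∀ i, ZMod (m i))) ∧
      k = (∑ i, Nat.log 2 (m i)) + 1} = {4 * r + 1} := by
    ext k
    simp only [Set.mem_setOf_eq, Set.mem_singleton_iff]
    constructor
    · rintro ⟨t, m, hm, ⟨φ⟩, rfl⟩
      have hdvd : ∀ i, m i ∣ 7 := by
        intro i
        have h1 : 7 • (1 : ∀ i, ZMod (m i)) = 0 := by
          apply φ.symm.injective
          rw [map_nsmul, map_zero]
          ext j
          simp only [Pi.smul_apply, Pi.zero_apply, nsmul_eq_mul]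
          rw [show ((7 : ℕ) : ZMod 7) = 0 from rfl, zero_mul]
        have h2 := congrFun h1 i
        rw [← ZMod.natCast_eq_zero_iff]
        simpa using h2
      have hcase : ∀ i, m i = 1 ∨ m i = 7 := fun i =>
        (Nat.dvd_prime (by norm_num)).1 (hdvd i)
      have hlog : ∀ i, Nat.log 2 (m i) = 2 * (if m i = 7 then 1 else 0) := by
        intro i
        rcases hcase i with h | h <;> rw [h] <;> norm_num
      have hpow : ∀ i, m i = 7 ^ (if m i = 7 then 1 else 0) := by
        intro i
        rcases hcase i with h | h <;> rw [h] <;> norm_num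
      have hcard := Nat.card_congr φ.toEquiv
      rw [Nat.card_pi, Nat.card_pi] at hcard
      simp only [Nat.card_zmod, prod_const, card_univ, Fintype.card_fin] at hcard
      rw [prod_congr rfl (fun i _ => hpow i), prod_pow_eq_pow_sum] at hcard
      have := Nat.pow_right_injective (le_refl 7 |>.trans' (by norm_num)) hcard
      rw [sum_congr rfl (fun i _ => hlog i), ← mul_sum]
      omega
    · rintro rfl
      refine ⟨2 * r, fun _ => 7, fun _ => by norm_num, ⟨AddEquiv.refl _⟩, ?_⟩
      have : Nat.log 2 7 = 2 := by norm_num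
      simp [this]
      omega
  rw [DavStarPM, this, csSup_singleton]

theorem stmt18 (r : ℕ) (hr : 0 < r) :
    5 * r + 1 ≤ Davpm (Fin (2 * r) → ZMod 7) ∧
    DavStarPM (Fin (2 * r) → ZMod 7) = 4 * r + 1 ∧
    r ≤ Davpm (Fin (2 * r) → ZMod 7) - DavStarPM (Fin (2 * r) → ZMod 7) := by
  have h1 := dav_lower r
  have h2 := star_eq r
  exact ⟨h1, h2, by omega⟩
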